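/- arXiv:1504.03496 — 6 statements merged into one kernel-verified Lean document; each statement's English description precedes it below -/
import Mathlib

section
/- Assume further that there is W₀ ∈ ℝ with ∫_0^∞ Θ(u) du = Φ/q − W₀ and ∫_0^∞ e^{−φu} Θ(u) du = (φ−Φ)/(δφ) − W₀. Let h′(+∞) := lim_{y→+∞} h′(y) ∈ (−∞, +∞] and h′(−∞) := lim_{y→−∞} h′(y) ∈ [−∞, +∞) (these limits exist by convexity). Then, in the extended reals, lim_{b→+∞} I(b) = (δΦ/φ)( h′(+∞)/q − β ) and lim_{b→−∞} I(b) = (δΦ/φ)( h′(−∞)/q − β ); in particular I(b) → +∞ as b → +∞ when h′(+∞) = +∞, and I(b) → −∞ as b → −∞ when h′(−∞) = −∞. -/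
open MeasureTheory Set Filter

lemma aux_real {μ : Measure ℝ} (f k X : ℝ → ℝ) (L : ℝ) (hf : Monotone f)
    (hk : Integrable k μ) (hk0 : ∀ᵐ y ∂μ, 0 ≤ k y)
    (hint : ∀ b, Integrable (fun y => f (X y + b) * k y) μ)
    (hL : Tendsto f atTop (nhds L)) :
    Tendsto (fun b => ∫ y, f (X y + b) * k y ∂μ) atTop (nhds (L * ∫ y, k y ∂μ)) := by
  rw [← integral_const_mul]
  have hle : ∀ x, f x ≤ L := fun x => hf.ge_of_tendsto hL x
  refine tendsto_integral_filter_of_dominated_convergence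
    (fun y => |f (X y + 0) * k y| + |L * k y|) ?_ ?_ ?_ ?_
  · exact Eventually.of_forall fun b => (hint b).aestronglyMeasurable
  · filter_upwards [eventually_ge_atTop (0:ℝ)] with b hb
    filter_upwards [hk0] with y hy
    rw [Real.norm_eq_abs]
    have h1 : f (X y + 0) * k y ≤ f (X y + b) * k y :=
      mul_le_mul_of_nonneg_right (hf (by linarith)) hy
    have h2 : f (X y + b) * k y ≤ L * k y := mul_le_mul_of_nonneg_right (hle _) hy
    rw [abs_le]
    constructor
    · linarith [neg_abs_le (f (X y + 0) * k y), abs_nonneg (L * k y)]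
    · linarith [le_abs_self (L * k y), abs_nonneg (f (X y + 0) * k y)]
  · exact (hint 0).abs.add (hk.const_mul L).abs
  · refine Eventually.of_forall fun y => ?_
    exact (hL.comp (tendsto_atTop_add_const_left _ _ tendsto_id)).mul_const _

lemma aux_top {μ : Measure ℝ} (f k X : ℝ → ℝ) (hf : Monotone f)
    (hk : Integrable k μ) (hk0 : ∀ᵐ y ∂μ, 0 ≤ k y) (hM : 0 < ∫ y, k y ∂μ)
    (hint : ∀ b, Integrable (fun y => f (X y + b) * k y) μ)
    (hL : Tendsto f atTop atTop) :
    Tendsto (fun b => ∫ y, f (X y + b) * k y ∂μ) atTop atTop := by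
  have key : ∀ c : ℝ, ∀ᶠ b in atTop, c * (∫ y, k y ∂μ) - 1 ≤ ∫ y, f (X y + b) * k y ∂μ := by
    intro c
    have hint' : ∀ b, Integrable (fun y => min (f (X y + b)) c * k y) μ := by
      intro b
      refine ((hint b).inf (hk.const_mul c)).congr ?_
      filter_upwards [hk0] with y hy
      simp only [Pi.inf_apply]
      exact (min_mul_of_nonneg _ _ hy).symm
    have ht := aux_real (fun x => min (f x) c) k X c (fun x y hxy => min_le_min_right _ (hf hxy))
      hk hk0 hint' (by
        refine tendsto_const_nhds.congr' ?_
        filter_upwards [hL.eventually_ge_atTop c] with x hx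
        exact (min_eq_right hx).symm)
    filter_upwards [ht.eventually (eventually_ge_nhds (sub_one_lt _))] with b hb
    refine hb.trans (integral_mono_ae (hint' b) (hint b) ?_)
    filter_upwards [hk0] with y hy
    exact mul_le_mul_of_nonneg_right (min_le_left _ _) hy
  rw [tendsto_atTop]
  intro a
  filter_upwards [key ((a + 1) / ∫ y, k y ∂μ)] with b hb
  rw [div_mul_cancel₀ _ hM.ne'] at hb
  linarith

lemma aux_real_bot {μ : Measure ℝ} (f k X : ℝ → ℝ) (L : ℝ) (hf : Monotone f)
    (hk : Integrable k μ) (hk0 : ∀ᵐ y ∂μ, 0 ≤ k y)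
    (hint : ∀ b, Integrable (fun y => f (X y + b) * k y) μ)
    (hL : Tendsto f atBot (nhds L)) :
    Tendsto (fun b => ∫ y, f (X y + b) * k y ∂μ) atBot (nhds (L * ∫ y, k y ∂μ)) := by
  have := aux_real (fun x => - f (-x)) k (fun y => - X y) (-L)
    (fun x y hxy => neg_le_neg (hf (neg_le_neg hxy))) hk hk0
    (fun b => by
      refine (hint (-b)).neg.congr (Eventually.of_forall fun y => ?_)
      simp [add_comm]) ((hL.comp tendsto_neg_atTop_atBot).neg)
  have h2 := (this.comp tendsto_neg_atBot_atTop).neg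
  simpa [Function.comp_def, integral_neg, neg_add, add_comm] using h2

lemma aux_bot {μ : Measure ℝ} (f k X : ℝ → ℝ) (hf : Monotone f)
    (hk : Integrable k μ) (hk0 : ∀ᵐ y ∂μ, 0 ≤ k y) (hM : 0 < ∫ y, k y ∂μ)
    (hint : ∀ b, Integrable (fun y => f (X y + b) * k y) μ)
    (hL : Tendsto f atBot atBot) :
    Tendsto (fun b => ∫ y, f (X y + b) * k y ∂μ) atBot atBot := by
  have := aux_top (fun x => - f (-x)) k (fun y => - X y)
    (fun x y hxy => neg_le_neg (hf (neg_le_neg hxy))) hk hk0 hM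
    (fun b => by
      refine (hint (-b)).neg.congr (Eventually.of_forall fun y => ?_)
      simp [add_comm]) (tendsto_neg_atBot_atTop.comp (hL.comp tendsto_neg_atTop_atBot))
  have h2 := tendsto_neg_atTop_atBot.comp (this.comp tendsto_neg_atBot_atTop)
  simpa [Function.comp_def, integral_neg, neg_add, add_comm] using h2

lemma aux_exp (φ u : ℝ) (hφ : 0 < φ) (hu : 0 < u) :
    ∫ x in Ioi (0:ℝ), (Iio u).indicator (fun x => Real.exp (-φ * (u - x))) x
      = (1 - Real.exp (-φ * u)) / φ := by
  rw [setIntegral_indicator measurableSet_Iio, Ioi_inter_Iio, ← integral_Ioc_eq_integral_Ioo,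
    ← intervalIntegral.integral_of_le hu.le]
  have : ∀ x ∈ uIcc 0 u, HasDerivAt (fun x => Real.exp (-φ * (u - x)) / φ)
      (Real.exp (-φ * (u - x))) x := by
    intro x _
    have h1 : HasDerivAt (fun x => -φ * (u - x)) φ x := by
      have := ((hasDerivAt_id x).const_sub u).const_mul (-φ)
      simpa using this
    have := h1.exp.div_const φ
    rwa [mul_div_cancel_right₀ _ hφ.ne'] at this
  rw [intervalIntegral.integral_eq_sub_of_hasDerivAt this
    ((by fun_prop : Continuous fun x => Real.exp (-φ * (u - x))).intervalIntegrable _ _)]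
  simp
  ring

lemma aux_G (φ : ℝ) (hφ : 0 < φ) (Θ : ℝ → ℝ) (hm : Measurable Θ)
    (h0 : ∀ u ∈ Ioi (0:ℝ), 0 ≤ Θ u) (hi : IntegrableOn Θ (Ioi 0)) (G : ℝ → ℝ)
    (hG : ∀ y ∈ Set.Iio (0 : ℝ),
      G y = ∫ z in Set.Ioi (0 : ℝ), Real.exp (-φ * z) * Θ (z - y)) :
    IntegrableOn G (Iio 0) ∧ ∫ y in Iio (0:ℝ), G y =
      ((∫ u in Ioi (0:ℝ), Θ u) - ∫ u in Ioi (0:ℝ), Real.exp (-φ * u) * Θ u) / φ := by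
  set F : ℝ × ℝ → ℝ := fun p =>
    (Iio p.2).indicator (fun x => Real.exp (-φ * (p.2 - x))) p.1 * Θ p.2 with hF
  have hFm : Measurable F := by
    refine Measurable.mul ?_ (hm.comp measurable_snd)
    have : (fun p : ℝ × ℝ => (Iio p.2).indicator (fun x => Real.exp (-φ * (p.2 - x))) p.1)
      = {p : ℝ × ℝ | p.1 < p.2}.indicator (fun p => Real.exp (-φ * (p.2 - p.1))) := by
      ext p
      simp [indicator]
    rw [this]
    exact (by fun_prop : Measurable fun p : ℝ × ℝ => Real.exp (-φ * (p.2 - p.1))).indicator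
      (measurableSet_lt measurable_fst measurable_snd)
  have hei : IntegrableOn (fun u => Real.exp (-φ * u) * Θ u) (Ioi 0) := by
    refine Integrable.mono hi (by fun_prop) ?_
    filter_upwards [ae_restrict_mem measurableSet_Ioi] with u hu
    rw [norm_mul, Real.norm_eq_abs, Real.abs_exp]
    refine mul_le_of_le_one_left (norm_nonneg _) (Real.exp_le_one_iff.2 ?_)
    have : 0 < φ * u := mul_pos hφ hu
    linarith
  have hFi : Integrable F ((volume.restrict (Ioi (0:ℝ))).prod (volume.restrict (Ioi (0:ℝ)))) := by
    rw [integrable_prod_iff' hFm.aestronglyMeasurable]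
    constructor
    · filter_upwards [ae_restrict_mem measurableSet_Ioi] with u hu
      refine Integrable.mul_const (𝕜 := ℝ) ?_ (Θ u)
      change Integrable ((Iio u).indicator (fun x => Real.exp (-φ * (u - x)))) _
      rw [integrable_indicator_iff measurableSet_Iio, IntegrableOn,
        Measure.restrict_restrict measurableSet_Iio]
      have : Continuous fun x => Real.exp (-φ * (u - x)) := by fun_prop
      exact (this.integrableOn_Icc (a := 0) (b := u)).mono_set
        (fun x hx => ⟨le_of_lt hx.2, le_of_lt hx.1⟩)
    · have : IntegrableOn (fun u => (Θ u - Real.exp (-φ * u) * Θ u) / φ) (Ioi 0) :=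
        (hi.sub hei).div_const φ
      refine this.congr ?_
      filter_upwards [ae_restrict_mem measurableSet_Ioi] with u hu
      have : ∀ x, ‖F (x, u)‖ =
          (Iio u).indicator (fun x => Real.exp (-φ * (u - x))) x * Θ u := by
        intro x
        rw [Real.norm_eq_abs, abs_of_nonneg]
        exact mul_nonneg (indicator_nonneg (fun _ _ => (Real.exp_pos _).le) _) (h0 u hu)
      simp only [this]
      rw [integral_mul_const, aux_exp φ u hφ hu]
      ring
  have hGF : ∀ x ∈ Ioi (0:ℝ), ∫ u in Ioi (0:ℝ), F (x, u) = G (-x) := by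
    intro x hx
    rw [hG (-x) (by simpa using hx)]
    have e1 : ∀ u, F (x, u) = (Ioi x).indicator (fun u => Real.exp (-φ * (u - x)) * Θ u) u := by
      intro u
      by_cases hxu : x < u <;> simp [hF, indicator, hxu]
    simp only [e1]
    rw [setIntegral_indicator measurableSet_Ioi, Ioi_inter_Ioi, sup_of_le_right (le_of_lt hx)]
    have := (measurePreserving_add_right (volume : Measure ℝ) x).setIntegral_preimage_emb
      (measurableEmbedding_addRight x) (fun u => Real.exp (-φ * (u - x)) * Θ u) (Ioi x)
    simp only [preimage_add_const_Ioi, sub_self, add_sub_cancel_right] at this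
    rw [← this]
    simp
  have hGi : IntegrableOn (fun x => G (-x)) (Ioi 0) := by
    refine (hFi.integral_prod_left).congr ?_
    filter_upwards [ae_restrict_mem measurableSet_Ioi] with x hx
    exact hGF x hx
  constructor
  · have := (Measure.measurePreserving_neg (volume : Measure ℝ)).integrableOn_comp_preimage
      (Homeomorph.neg ℝ).measurableEmbedding (f := G) (s := Iio 0)
    refine this.1 ?_
    simpa [Function.comp_def] using hGi
  · have h1 := integral_comp_neg_Ioi (0:ℝ) G
    rw [neg_zero] at h1
    rw [← integral_Iic_eq_integral_Iio, ← h1, ← setIntegral_congr_fun measurableSet_Ioi hGF,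
      integral_integral_swap (f := fun x u => F (x, u)) hFi, ← integral_sub hi hei, ← integral_div]
    refine setIntegral_congr_fun measurableSet_Ioi fun u hu => ?_
    simp only [hF]
    rw [integral_mul_const, aux_exp φ u hφ hu]
    ring

lemma aux_split (k : ℝ → ℝ) (a b : ℝ → ℝ) (ha : IntegrableOn a (Iio 0))
    (hb : IntegrableOn b (Ioi 0)) (hka : ∀ y < 0, k y = a y) (hkb : ∀ y > 0, k y = b y) :
    Integrable k ∧ ∫ y, k y = (∫ y in Iio (0:ℝ), a y) + ∫ y in Ioi (0:ℝ), b y := by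
  have h1 : IntegrableOn k (Iio 0) :=
    ha.congr_fun (fun y hy => (hka y hy).symm) measurableSet_Iio
  have h2 : IntegrableOn k (Ioi 0) :=
    hb.congr_fun (fun y hy => (hkb y hy).symm) measurableSet_Ioi
  have h1' : IntegrableOn k (Iic 0) := (integrableOn_Iic_iff_integrableOn_Iio (by finiteness)).2 h1
  constructor
  · rw [← integrableOn_univ, ← Iic_union_Ioi (a := (0:ℝ))]
    exact h1'.union h2
  · rw [← intervalIntegral.integral_Iic_add_Ioi h1' h2, integral_Iic_eq_integral_Iio,
      setIntegral_congr_fun measurableSet_Iio hka, setIntegral_congr_fun measurableSet_Ioi hkb]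



/-- Lemma 3.3: the limits of `I` at `±∞` in the extended reals are
`(δΦ/φ)(h'(±∞)/q - β)`; in particular `I → +∞` when `h'(+∞) = +∞` and `I → -∞`
when `h'(-∞) = -∞`. -/
theorem stmt6
    (q δ β Φ φ : ℝ)
    (hq : 0 < q) (hδ : 0 < δ) (hΦ : 0 < Φ) (hΦφ : Φ < φ)
    (Θ : ℝ → ℝ) (hΘmeas : Measurable Θ) (hΘnn : ∀ u ∈ Set.Ioi (0 : ℝ), 0 ≤ Θ u)
    (h : ℝ → ℝ) (hconv : ConvexOn ℝ Set.univ h) (hdiff : Differentiable ℝ h)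
    (G : ℝ → ℝ)
    (hG : ∀ y ∈ Set.Iio (0 : ℝ),
      G y = ∫ z in Set.Ioi (0 : ℝ), Real.exp (-φ * z) * Θ (z - y))
    (hint1 : ∀ b : ℝ,
      IntegrableOn (fun y => deriv h (y + b) * Real.exp (-φ * y)) (Set.Ioi 0))
    (hint2 : ∀ b : ℝ,
      IntegrableOn (fun y => deriv h (y + b) * G y) (Set.Iio 0))
    (I : ℝ → ℝ)
    (hI : ∀ b : ℝ, I b =
      (φ - Φ) / φ * (∫ y in Set.Ioi (0 : ℝ), deriv h (y + b) * Real.exp (-φ * y))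
      + δ * ((∫ y in Set.Iio (0 : ℝ), deriv h (y + b) * G y) - β * Φ / φ))
    (W₀ : ℝ)
    (hΘ1 : ∫ u in Set.Ioi (0 : ℝ), Θ u = Φ / q - W₀)
    (hΘ2 : ∫ u in Set.Ioi (0 : ℝ), Real.exp (-φ * u) * Θ u = (φ - Φ) / (δ * φ) - W₀)
    (hΘint : IntegrableOn Θ (Set.Ioi 0))
    (Lp Lm : EReal)
    (hLp : Tendsto (fun y => ((deriv h y : ℝ) : EReal)) atTop (nhds Lp))
    (hLm : Tendsto (fun y => ((deriv h y : ℝ) : EReal)) atBot (nhds Lm))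
    (hLp_ne : Lp ≠ ⊥) (hLm_ne : Lm ≠ ⊤) :
    Tendsto (fun b => ((I b : ℝ) : EReal)) atTop
      (nhds (((δ * Φ / φ : ℝ) : EReal) * (Lp / ((q : ℝ) : EReal) - ((β : ℝ) : EReal)))) ∧
    Tendsto (fun b => ((I b : ℝ) : EReal)) atBot
      (nhds (((δ * Φ / φ : ℝ) : EReal) * (Lm / ((q : ℝ) : EReal) - ((β : ℝ) : EReal)))) ∧
    (Lp = ⊤ → Tendsto I atTop atTop) ∧
    (Lm = ⊥ → Tendsto I atBot atBot) := by
  have hφ : 0 < φ := hΦ.trans hΦφ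
  obtain ⟨hGi, hGint⟩ := aux_G φ hφ Θ hΘmeas hΘnn hΘint G hG
  rw [hΘ1, hΘ2] at hGint
  have hmono : Monotone (deriv h) := by
    have := hconv.monotoneOn_deriv (fun x _ => hdiff x)
    exact fun x y hxy => this (mem_univ x) (mem_univ y) hxy
  set k : ℝ → ℝ := fun y => if y < 0 then δ * G y else (φ - Φ) / φ * Real.exp (-φ * y) with hkdef
  have hk0 : ∀ᵐ y, 0 ≤ k y := by
    refine Eventually.of_forall fun y => ?_
    simp only [hkdef]
    split_ifs with hy
    · rw [hG y hy]
      refine mul_nonneg hδ.le (setIntegral_nonneg measurableSet_Ioi fun z hz => ?_)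
      refine mul_nonneg (Real.exp_pos _).le (hΘnn _ ?_)
      simp only [mem_Ioi] at hz ⊢
      linarith
    · have : 0 < φ - Φ := by linarith
      positivity
  obtain ⟨hki, hkint⟩ := aux_split k (fun y => δ * G y)
    (fun y => (φ - Φ) / φ * Real.exp (-φ * y)) (hGi.const_mul δ)
    ((exp_neg_integrableOn_Ioi 0 hφ).const_mul _) (fun y hy => if_pos hy)
    (fun y hy => if_neg (not_lt.2 (le_of_lt hy)))
  rw [integral_const_mul, integral_const_mul, hGint,
    integral_exp_mul_Ioi (neg_neg_of_pos hφ) 0] at hkint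
  have hkM : ∫ y, k y = δ * Φ / φ / q := by
    rw [hkint]
    simp
    field_simp
    ring
  have hM : 0 < ∫ y, k y := by rw [hkM]; positivity
  have hsp := fun b => aux_split (fun y => deriv h (id y + b) * k y)
    (fun y => δ * (deriv h (y + b) * G y))
    (fun y => (φ - Φ) / φ * (deriv h (y + b) * Real.exp (-φ * y))) ((hint2 b).const_mul δ)
    ((hint1 b).const_mul _)
    (fun y hy => by simp only [hkdef, if_pos hy, id]; ring)
    (fun y hy => by simp only [hkdef, if_neg (not_lt.2 (le_of_lt hy)), id]; ring)
  have hIb : ∀ b, I b = (∫ y, deriv h (id y + b) * k y) + -(δ * Φ / φ * β) := by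
    intro b
    rw [hI, (hsp b).2, integral_const_mul, integral_const_mul]
    ring
  have hIf : I = fun b => (∫ y, deriv h (id y + b) * k y) + -(δ * Φ / φ * β) := funext hIb
  have hc : 0 < δ * Φ / φ := by positivity
  have htop : Lp = ⊤ → Tendsto I atTop atTop := by
    rintro rfl
    rw [hIf]
    exact tendsto_atTop_add_const_right _ _
      (aux_top _ k id hmono hki hk0 hM (fun b => (hsp b).1) (EReal.tendsto_coe_nhds_top_iff.1 hLp))
  have hbot : Lm = ⊥ → Tendsto I atBot atBot := by
    rintro rfl
    rw [hIf]
    exact tendsto_atBot_add_const_right _ _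
      (aux_bot _ k id hmono hki hk0 hM (fun b => (hsp b).1) (EReal.tendsto_coe_nhds_bot_iff.1 hLm))
  have hreal : ∀ L : ℝ, ((δ * Φ / φ : ℝ) : EReal) * ((L : EReal) / ((q : ℝ) : EReal) - (β : EReal))
      = ((L * (∫ y, k y) + -(δ * Φ / φ * β) : ℝ) : EReal) := by
    intro L
    rw [← EReal.coe_div, ← EReal.coe_sub, ← EReal.coe_mul, hkM]
    congr 1
    ring
  refine ⟨?_, ?_, htop, hbot⟩
  · induction Lp with
    | bot => exact absurd rfl hLp_ne
    | top =>
      rw [EReal.top_div_of_pos_ne_top (by exact_mod_cast hq) (EReal.coe_ne_top _),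
        EReal.top_sub_coe, EReal.coe_mul_top_of_pos hc]
      exact EReal.tendsto_coe_nhds_top_iff.2 (htop rfl)
    | coe L =>
      rw [hreal, EReal.tendsto_coe, hIf]
      exact (aux_real _ k id L hmono hki hk0 (fun b => (hsp b).1)
        (EReal.tendsto_coe.1 hLp)).add_const _
  · induction Lm with
    | top => exact absurd rfl hLm_ne
    | bot =>
      rw [EReal.bot_div_of_pos_ne_top (by exact_mod_cast hq) (EReal.coe_ne_top _),
        EReal.bot_sub, EReal.coe_mul_bot_of_pos hc]
      exact EReal.tendsto_coe_nhds_bot_iff.2 (hbot rfl)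
    | coe L =>
      rw [hreal, EReal.tendsto_coe, hIf]
      exact (aux_real_bot _ k id L hmono hki hk0 (fun b => (hsp b).1)
        (EReal.tendsto_coe.1 hLm)).add_const _
end

section
/- Assume further that there are W₀ ∈ ℝ and m ∈ ℝ with ∫_0^∞ Θ(u) du = Φ/q − W₀, ∫_0^∞ e^{−φu} Θ(u) du = (φ−Φ)/(δφ) − W₀, and ∫_0^∞ u Θ(u) du = (Φ/q) m. If h(y) = α y² with α > 0, then for every b ∈ ℝ, I(b) = (2αδΦ/(qφ)) · ( b − ( βq/(2α) + m − 1/φ ) ); in particular I(b) = 0 if and only if b = βq/(2α) + m − 1/φ. -/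
open MeasureTheory Set Filter


lemma fub_aux (φ : ℝ) (Θ : ℝ → ℝ) (hΘmeas : Measurable Θ)
    (hΘnn : ∀ u ∈ Set.Ioi (0 : ℝ), 0 ≤ Θ u) (G : ℝ → ℝ)
    (hG : ∀ y ∈ Set.Iio (0 : ℝ),
      G y = ∫ z in Set.Ioi (0 : ℝ), Real.exp (-φ * z) * Θ (z - y))
    (k K : ℝ → ℝ) (hk : Continuous k) (hk0 : ∀ y < 0, 0 ≤ k y)
    (hK : ∀ u > 0, ∫ y in (-u)..0, k y * Real.exp (-φ * (u + y)) = K u)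
    (hKint : IntegrableOn (fun u => K u * Θ u) (Set.Ioi 0)) :
    IntegrableOn (fun y => k y * G y) (Set.Iio 0) ∧
    ∫ y in Set.Iio (0 : ℝ), k y * G y = ∫ u in Set.Ioi (0 : ℝ), K u * Θ u := by
  set f : ℝ × ℝ → ℝ := Set.indicator {p : ℝ × ℝ | -p.2 < p.1}
    (fun p => k p.1 * Real.exp (-φ * (p.2 + p.1)) * Θ p.2) with hf
  have hfm : Measurable f := by
    apply Measurable.indicator
    · have := hk.measurable
      fun_prop
    · exact measurableSet_lt (by fun_prop) (by fun_prop)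
  have sec : ∀ u : ℝ, (fun y => f (y, u)) = (Set.Ioi (-u)).indicator
      (fun y => k y * Real.exp (-φ * (u + y)) * Θ u) := by
    intro u; ext y
    simp only [hf, Set.indicator, Set.mem_ofPred_eq, Set.mem_Ioi]
  have hcont : ∀ u : ℝ, Continuous (fun y => k y * Real.exp (-φ * (u + y)) * Θ u) := by
    intro u; fun_prop
  have hnn : ∀ u > 0, ∀ y < 0, 0 ≤ f (y, u) := by
    intro u hu y hy
    simp only [hf]
    refine Set.indicator_apply_nonneg fun _ => ?_
    exact mul_nonneg (mul_nonneg (hk0 y hy) (Real.exp_pos _).le) (hΘnn u hu)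
  have hsecI : ∀ u > 0, ∫ y in Set.Iio (0:ℝ), f (y, u) = K u * Θ u := by
    intro u hu
    rw [sec u, setIntegral_indicator measurableSet_Ioi, Set.Iio_inter_Ioi,
      ← integral_Ioc_eq_integral_Ioo, ← intervalIntegral.integral_of_le (by linarith),
      intervalIntegral.integral_mul_const, hK u hu]
  have hfi : Integrable f ((volume.restrict (Set.Iio (0:ℝ))).prod
      (volume.restrict (Set.Ioi (0:ℝ)))) := by
    rw [integrable_prod_iff' hfm.aestronglyMeasurable]
    constructor
    · filter_upwards [ae_restrict_mem measurableSet_Ioi] with u hu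
      rw [sec u, integrable_indicator_iff measurableSet_Ioi, IntegrableOn,
        Measure.restrict_restrict measurableSet_Ioi, Set.Ioi_inter_Iio]
      exact ((hcont u).integrableOn_Icc (a := -u) (b := 0)).mono_set Set.Ioo_subset_Icc_self
    · refine Integrable.congr hKint ?_
      filter_upwards [ae_restrict_mem measurableSet_Ioi] with u hu
      rw [← hsecI u hu]
      apply setIntegral_congr_fun measurableSet_Iio
      intro y hy
      exact (Real.norm_of_nonneg (hnn u hu y hy)).symm
  have hin : ∀ y < 0, ∫ u in Set.Ioi (0:ℝ), f (y, u) = k y * G y := by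
    intro y hy
    have e : (fun u => f (y, u)) = (Set.Ioi (-y)).indicator
        (fun u => k y * (Real.exp (-φ * (u + y)) * Θ u)) := by
      ext u
      simp only [hf, Set.indicator, Set.mem_ofPred_eq, Set.mem_Ioi, mul_assoc, neg_lt]
    rw [e, setIntegral_indicator measurableSet_Ioi, Set.Ioi_inter_Ioi,
      sup_eq_right.2 (by linarith), integral_const_mul, hG y hy]
    congr 1
    have := (measurePreserving_sub_right volume y).setIntegral_preimage_emb
      (MeasurableEquiv.subRight y).measurableEmbedding
      (fun u => Real.exp (-φ * (u + y)) * Θ u) (Set.Ioi (-y))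
    rw [← this]
    simp
  constructor
  · refine Integrable.congr hfi.integral_prod_left ?_
    filter_upwards [ae_restrict_mem measurableSet_Iio] with y hy
    exact hin y hy
  · rw [← setIntegral_congr_fun measurableSet_Iio (fun y hy => hin y hy),
      ← setIntegral_congr_fun measurableSet_Ioi (fun u hu => hsecI u hu)]
    exact integral_integral_swap hfi

/-- Example 3.2: for the quadratic cost `h(y) = α y²`,
`I(b) = (2αδΦ/(qφ)) (b - (βq/(2α) + m - 1/φ))`, so `I(b) = 0` iff
`b = βq/(2α) + m - 1/φ`. -/
theorem stmt7
    (q δ β Φ φ : ℝ)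
    (hq : 0 < q) (hδ : 0 < δ) (hΦ : 0 < Φ) (hΦφ : Φ < φ)
    (Θ : ℝ → ℝ) (hΘmeas : Measurable Θ) (hΘnn : ∀ u ∈ Set.Ioi (0 : ℝ), 0 ≤ Θ u)
    (h : ℝ → ℝ) (hconv : ConvexOn ℝ Set.univ h) (hdiff : Differentiable ℝ h)
    (G : ℝ → ℝ)
    (hG : ∀ y ∈ Set.Iio (0 : ℝ),
      G y = ∫ z in Set.Ioi (0 : ℝ), Real.exp (-φ * z) * Θ (z - y))
    (hint1 : ∀ b : ℝ,
      IntegrableOn (fun y => deriv h (y + b) * Real.exp (-φ * y)) (Set.Ioi 0))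
    (hint2 : ∀ b : ℝ,
      IntegrableOn (fun y => deriv h (y + b) * G y) (Set.Iio 0))
    (I : ℝ → ℝ)
    (hI : ∀ b : ℝ, I b =
      (φ - Φ) / φ * (∫ y in Set.Ioi (0 : ℝ), deriv h (y + b) * Real.exp (-φ * y))
      + δ * ((∫ y in Set.Iio (0 : ℝ), deriv h (y + b) * G y) - β * Φ / φ))
    (W₀ m : ℝ)
    (hΘ1 : ∫ u in Set.Ioi (0 : ℝ), Θ u = Φ / q - W₀)
    (hΘ2 : ∫ u in Set.Ioi (0 : ℝ), Real.exp (-φ * u) * Θ u = (φ - Φ) / (δ * φ) - W₀)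
    (hΘ3 : ∫ u in Set.Ioi (0 : ℝ), u * Θ u = (Φ / q) * m)
    (hΘint : IntegrableOn Θ (Set.Ioi 0))
    (hΘint3 : IntegrableOn (fun u => u * Θ u) (Set.Ioi 0))
    (α : ℝ) (hα : 0 < α)
    (hquad : ∀ y : ℝ, h y = α * y ^ 2) :
    ∀ b : ℝ,
      I b = (2 * α * δ * Φ / (q * φ)) * (b - (β * q / (2 * α) + m - 1 / φ)) ∧
      (I b = 0 ↔ b = β * q / (2 * α) + m - 1 / φ) := by
  intro b
  have hφ : 0 < φ := hΦ.trans hΦφ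
  have hd : ∀ y, deriv h y = 2 * α * y := by
    intro y
    have : h = fun y => α * y ^ 2 := funext hquad
    rw [this]
    have := ((hasDerivAt_pow 2 y).const_mul α).deriv
    rw [this]; norm_num; ring
  have hE : IntegrableOn (fun u => Real.exp (-φ * u) * Θ u) (Set.Ioi 0) := by
    refine Integrable.mono' hΘint (by fun_prop) ?_
    filter_upwards [ae_restrict_mem measurableSet_Ioi] with u hu
    have h0 := hΘnn u hu
    rw [Real.norm_of_nonneg (mul_nonneg (Real.exp_pos _).le h0)]
    apply mul_le_of_le_one_left h0
    apply Real.exp_le_one_iff.2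
    have : 0 < u := hu
    nlinarith
  have hD : IntegrableOn (fun u => Θ u - Real.exp (-φ * u) * Θ u) (Set.Ioi 0) := hΘint.sub hE
  have hDi : ∫ u in Set.Ioi (0:ℝ), (Θ u - Real.exp (-φ * u) * Θ u)
      = Φ / q - (φ - Φ) / (δ * φ) := by
    rw [integral_sub hΘint hE, hΘ1, hΘ2]; ring
  have e0 : ∀ u, (1 / φ * (1 - Real.exp (-φ * u))) * Θ u
      = 1 / φ * (Θ u - Real.exp (-φ * u) * Θ u) := by intro u; ring
  have e1 : ∀ u, (u / φ - 1 / φ ^ 2 * (1 - Real.exp (-φ * u))) * Θ u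
      = 1 / φ * (u * Θ u) - 1 / φ ^ 2 * (Θ u - Real.exp (-φ * u) * Θ u) := by intro u; ring
  obtain ⟨i0, v0⟩ := fub_aux φ Θ hΘmeas hΘnn G hG (fun _ => 1)
    (fun u => 1 / φ * (1 - Real.exp (-φ * u))) continuous_const (fun _ _ => zero_le_one)
    (by
      intro u hu
      have hda : ∀ y ∈ Set.uIcc (-u) 0, HasDerivAt
          (fun y => (-1 / φ) * Real.exp (-φ * (u + y)))
          ((fun _ => (1:ℝ)) y * Real.exp (-φ * (u + y))) y := by
        intro y _
        have h1 : HasDerivAt (fun y => -φ * (u + y)) (-φ * 1) y :=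
          ((hasDerivAt_id y).const_add u).const_mul (-φ)
        refine (h1.exp.const_mul (-1 / φ)).congr_deriv ?_
        field_simp
      rw [intervalIntegral.integral_eq_sub_of_hasDerivAt hda
        (Continuous.intervalIntegrable (by fun_prop) _ _)]
      simp
      field_simp
      ring) (by simp only [e0]; exact hD.const_mul _)
  obtain ⟨i1, v1⟩ := fub_aux φ Θ hΘmeas hΘnn G hG (fun y => -y)
    (fun u => u / φ - 1 / φ ^ 2 * (1 - Real.exp (-φ * u))) continuous_neg
    (fun y hy => by linarith)
    (by
      intro u hu
      have hda : ∀ y ∈ Set.uIcc (-u) 0, HasDerivAt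
          (fun y => (y / φ + 1 / φ ^ 2) * Real.exp (-φ * (u + y)))
          ((-y) * Real.exp (-φ * (u + y))) y := by
        intro y _
        have h1 : HasDerivAt (fun y => -φ * (u + y)) (-φ * 1) y :=
          ((hasDerivAt_id y).const_add u).const_mul (-φ)
        have h2 : HasDerivAt (fun y => y / φ + 1 / φ ^ 2) (1 / φ) y :=
          ((hasDerivAt_id y).div_const φ).add_const _
        refine (h2.mul h1.exp).congr_deriv ?_
        field_simp
        ring
      rw [intervalIntegral.integral_eq_sub_of_hasDerivAt hda
        (Continuous.intervalIntegrable (by fun_prop) _ _)]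
      simp
      field_simp
      ring) (by simp only [e1]; exact (hΘint3.const_mul _).sub (hD.const_mul _))
  simp only [e0, e1] at v0 v1
  rw [integral_const_mul (1 / φ), hDi] at v0
  rw [integral_sub (hΘint3.const_mul _) (hD.const_mul _), integral_const_mul,
    integral_const_mul, hDi, hΘ3] at v1
  have w2 : ∫ y in Set.Iio (0 : ℝ), deriv h (y + b) * G y
      = 2 * α * (b * (1 / φ * (Φ / q - (φ - Φ) / (δ * φ)))
        - (1 / φ * (Φ / q * m) - 1 / φ ^ 2 * (Φ / q - (φ - Φ) / (δ * φ)))) := by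
    rw [← v0, ← v1, ← integral_const_mul, ← integral_sub (i0.const_mul b) i1,
      ← integral_const_mul]
    congr 1; ext y; rw [hd]; ring
  have j0 : IntegrableOn (fun y => Real.exp (-φ * y)) (Set.Ioi 0) :=
    integrableOn_exp_mul_Ioi (by linarith) 0
  have u0 : ∫ y in Set.Ioi (0:ℝ), Real.exp (-φ * y) = 1 / φ := by
    rw [integral_exp_mul_Ioi (by linarith)]; simp
  have u1 : ∫ y in Set.Ioi (0:ℝ), y * Real.exp (-φ * y) = 1 / φ ^ 2 := by
    have := Real.integral_rpow_mul_exp_neg_mul_Ioi (a := 2) (r := φ) (by norm_num) hφ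
    norm_num at this
    simpa using this
  have j1 : IntegrableOn (fun y => y * Real.exp (-φ * y)) (Set.Ioi 0) := by
    have := (hint1 0).const_mul (1 / (2 * α))
    refine Integrable.congr this (Filter.Eventually.of_forall fun y => ?_)
    simp only [hd]; field_simp; ring
  have w1 : ∫ y in Set.Ioi (0 : ℝ), deriv h (y + b) * Real.exp (-φ * y)
      = 2 * α * (1 / φ ^ 2 + b * (1 / φ)) := by
    rw [← u0, ← u1, ← integral_const_mul, ← integral_add j1 (j0.const_mul b),
      ← integral_const_mul]
    congr 1; ext y; rw [hd]; ring
  have key : I b = (2 * α * δ * Φ / (q * φ)) * (b - (β * q / (2 * α) + m - 1 / φ)) := by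
    rw [hI, w1, w2]
    field_simp
    ring
  refine ⟨key, ?_⟩
  have hc : 2 * α * δ * Φ / (q * φ) ≠ 0 := by positivity
  rw [key, mul_eq_zero, or_iff_right hc, sub_eq_zero]
end

section
/- Let X : [0,∞) → ℝ be a càdlàg function with X_0 = 0, let b ∈ ℝ and δ > 0. Suppose x ≤ y are reals and U^x, U^y : [0,∞) → ℝ are càdlàg functions satisfying U^x_t = x + X_t − δ ∫_0^t 1_{\{U^x_s > b\}} ds and U^y_t = y + X_t − δ ∫_0^t 1_{\{U^y_s > b\}} ds for all t ≥ 0. Then U^x_t ≤ U^y_t for all t ≥ 0. -/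
open MeasureTheory Set Filter

lemma ind_intervalIntegrable (U : ℝ → ℝ) (b : ℝ)
    (h : ∀ t : ℝ, 0 ≤ t → ContinuousWithinAt U (Set.Ici t) t) (a t : ℝ) (ha : 0 ≤ a) (hat : a ≤ t) :
    IntervalIntegrable (Set.indicator {u : ℝ | b < U u} (fun _ => (1 : ℝ))) volume a t := by
  have hm : MeasurableSet {u : ℝ | 0 ≤ u ∧ b < U u} := by
    apply MeasurableSet.of_mem_nhdsGT
    rintro u ⟨hu, hbu⟩
    have h1 : ∀ᶠ v in nhdsWithin u (Set.Ici u), b < U v := (h u hu).eventually (lt_mem_nhds hbu)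
    have h2 := h1.filter_mono (nhdsWithin_mono u Set.Ioi_subset_Ici_self)
    filter_upwards [h2, self_mem_nhdsWithin] with v hv hv'
    exact ⟨hu.trans (le_of_lt hv'), hv⟩
  have hi : IntervalIntegrable (Set.indicator {u : ℝ | 0 ≤ u ∧ b < U u} (fun _ => (1 : ℝ)))
      volume a t := by
    rw [intervalIntegrable_iff_integrableOn_Ioc_of_le hat]
    have hc : IntegrableOn (fun _ : ℝ => (1 : ℝ)) (Set.Ioc a t) volume := by simp
    exact hc.indicator hm
  refine hi.congr ?_
  intro u hu
  rw [Set.uIoc_of_le hat] at hu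
  have : 0 ≤ u := ha.trans hu.1.le
  simp [Set.indicator, this]

/-- pathwise comparison of refracted trajectories driven by the same
càdlàg path `X`, refraction level `b` and rate `δ`, started from ordered points. -/
theorem stmt10
    (X : ℝ → ℝ) (b δ : ℝ) (hδ : 0 < δ)
    (hX0 : X 0 = 0)
    (hX_rc : ∀ t : ℝ, 0 ≤ t → ContinuousWithinAt X (Set.Ici t) t)
    (hX_ll : ∀ t : ℝ, 0 < t → ∃ l : ℝ, Tendsto X (nhdsWithin t (Set.Iio t)) (nhds l))
    (x y : ℝ) (hxy : x ≤ y)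
    (Ux Uy : ℝ → ℝ)
    (hUx_rc : ∀ t : ℝ, 0 ≤ t → ContinuousWithinAt Ux (Set.Ici t) t)
    (hUx_ll : ∀ t : ℝ, 0 < t → ∃ l : ℝ, Tendsto Ux (nhdsWithin t (Set.Iio t)) (nhds l))
    (hUy_rc : ∀ t : ℝ, 0 ≤ t → ContinuousWithinAt Uy (Set.Ici t) t)
    (hUy_ll : ∀ t : ℝ, 0 < t → ∃ l : ℝ, Tendsto Uy (nhdsWithin t (Set.Iio t)) (nhds l))
    (hUx : ∀ t : ℝ, 0 ≤ t →
      Ux t = x + X t - δ * ∫ s in (0 : ℝ)..t, Set.indicator {u : ℝ | b < Ux u} (fun _ => (1 : ℝ)) s)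
    (hUy : ∀ t : ℝ, 0 ≤ t →
      Uy t = y + X t - δ * ∫ s in (0 : ℝ)..t, Set.indicator {u : ℝ | b < Uy u} (fun _ => (1 : ℝ)) s) :
    ∀ t : ℝ, 0 ≤ t → Ux t ≤ Uy t := by
  intro t ht
  set f := Set.indicator {u : ℝ | b < Ux u} (fun _ => (1 : ℝ)) with hf
  set g := Set.indicator {u : ℝ | b < Uy u} (fun _ => (1 : ℝ)) with hg
  have hfi := ind_intervalIntegrable Ux b hUx_rc
  have hgi := ind_intervalIntegrable Uy b hUy_rc
  by_contra hcon
  push Not at hcon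
  have hcf : ContinuousOn (fun u => ∫ s in (0 : ℝ)..u, f s) (Set.Icc 0 t) := by
    have := intervalIntegral.continuousOn_primitive_interval' (hfi 0 t le_rfl ht)
      Set.left_mem_uIcc
    rwa [Set.uIcc_of_le ht] at this
  have hcg : ContinuousOn (fun u => ∫ s in (0 : ℝ)..u, g s) (Set.Icc 0 t) := by
    have := intervalIntegral.continuousOn_primitive_interval' (hgi 0 t le_rfl ht)
      Set.left_mem_uIcc
    rwa [Set.uIcc_of_le ht] at this
  have hD : ContinuousOn (fun u => Ux u - Uy u) (Set.Icc 0 t) := by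
    have h1 : ContinuousOn (fun u => (x - y) - δ * ((∫ s in (0 : ℝ)..u, f s)
        - ∫ s in (0 : ℝ)..u, g s)) (Set.Icc 0 t) :=
      continuousOn_const.sub (continuousOn_const.mul (hcf.sub hcg))
    refine h1.congr ?_
    intro u hu
    simp only [hUx u hu.1, hUy u hu.1]
    ring
  have hcl : IsClosed (Set.Icc 0 t ∩ (fun u => Ux u - Uy u) ⁻¹' Set.Iic 0) :=
    hD.preimage_isClosed_of_isClosed isClosed_Icc isClosed_Iic
  have hcomp : IsCompact (Set.Icc 0 t ∩ (fun u => Ux u - Uy u) ⁻¹' Set.Iic 0) :=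
    isCompact_Icc.of_isClosed_subset hcl Set.inter_subset_left
  have h0 : Ux 0 - Uy 0 ≤ 0 := by
    rw [hUx 0 le_rfl, hUy 0 le_rfl]
    simp [hxy]
  obtain ⟨s, ⟨⟨hs0, hst⟩, hsD⟩, hmax⟩ := hcomp.exists_isGreatest ⟨0, ⟨le_rfl, ht⟩, h0⟩
  have hsD' : Ux s - Uy s ≤ 0 := hsD
  have hint : ∫ u in s..t, g u ≤ ∫ u in s..t, f u := by
    apply intervalIntegral.integral_mono_on_of_le_Ioo hst (hgi s t hs0 hst) (hfi s t hs0 hst)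
    intro u hu
    have hpos : Uy u < Ux u := by
      by_contra hn
      have := hmax ⟨⟨hs0.trans hu.1.le, hu.2.le⟩, (by simpa using hn : Ux u - Uy u ≤ 0)⟩
      exact absurd hu.1 (not_lt.mpr this)
    simp only [hf, hg, Set.indicator, Set.mem_setOf_eq]
    split_ifs <;> linarith
  have e1 := intervalIntegral.integral_add_adjacent_intervals (hfi 0 s le_rfl hs0) (hfi s t hs0 hst)
  have e2 := intervalIntegral.integral_add_adjacent_intervals (hgi 0 s le_rfl hs0) (hgi s t hs0 hst)
  rw [hUx s hs0, hUy s hs0] at hsD'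
  rw [hUx t ht, hUy t ht, ← e1, ← e2] at hcon
  have := mul_le_mul_of_nonneg_left hint hδ.le
  simp only [mul_add] at hcon
  linarith
end

section
/- Let b* ∈ ℝ, α > 0 and ε̄ > 0, and let (I_n) be a sequence of nondecreasing functions ℝ → ℝ such that: (i) for all n and all b*, b′ with b* − ε̄ < b′ ≤ b < b* + ε̄, I_n(b) − I_n(b′) ≥ α (b − b′); and (ii) I_n(b*) → 0 as n → ∞. If (b_n) is a sequence of reals with I_n(b_n) = 0 for every n, then b_n → b*. -/
open Filter

/-- real-analytic core of Proposition 5.2: roots of the monotone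
functions `I_n` converge to the root `b*` of the limit function. -/
theorem stmt14
    (bstar α εbar : ℝ) (hα : 0 < α) (hε : 0 < εbar)
    (I : ℕ → ℝ → ℝ)
    (hmono : ∀ n, Monotone (I n))
    (hlower : ∀ n : ℕ, ∀ b b' : ℝ,
      bstar - εbar < b' → b' ≤ b → b < bstar + εbar →
      α * (b - b') ≤ I n b - I n b')
    (hIb : Tendsto (fun n => I n bstar) atTop (nhds 0))
    (b : ℕ → ℝ) (hroot : ∀ n, I n (b n) = 0) :
    Tendsto b atTop (nhds bstar) := by
  rw [Metric.tendsto_atTop] at hIb ⊢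
  intro e he
  obtain ⟨d, hd, hde, hdε⟩ : ∃ d : ℝ, 0 < d ∧ d < e ∧ d < εbar := by
    obtain ⟨d, hd, hd2⟩ := exists_between (lt_min he hε)
    exact ⟨d, hd, lt_of_lt_of_le hd2 (min_le_left _ _), lt_of_lt_of_le hd2 (min_le_right _ _)⟩
  obtain ⟨N, hN⟩ := hIb (α * d) (mul_pos hα hd)
  refine ⟨N, fun n hn => ?_⟩
  have h := hN n hn
  rw [Real.dist_eq, sub_zero, abs_lt] at h
  have hr := hroot n
  have hu := hlower n (bstar + d) bstar (by linarith) (by linarith) (by linarith)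
  have hl := hlower n bstar (bstar - d) (by linarith) (by linarith) (by linarith)
  rw [add_sub_cancel_left] at hu
  rw [sub_sub_cancel] at hl
  rw [Real.dist_eq, abs_lt]
  constructor
  · by_contra hc
    have := hmono n (show b n ≤ bstar - d by linarith)
    linarith
  · by_contra hc
    have := hmono n (show bstar + d ≤ b n by linarith)
    linarith
end

section
/- Let φ > 0 and let h : ℝ → ℝ be convex and differentiable with ∫_0^∞ |h′(y+b)| e^{−φy} dy < ∞ for every b ∈ ℝ. Define J(b) := ∫_0^∞ h′(y+b) e^{−φy} dy. Then for all reals b₁ ≤ b₂ and every ε > 0, J(b₁ + ε) − J(b₁) ≥ e^{−φ (b₂ − b₁)} ( J(b₂ + ε) − J(b₂) ). -/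
open MeasureTheory Set Filter

/-- the increment form of the derivative bound
`J(b₁+ε) - J(b₁) ≥ e^{-φ(b₂-b₁)} (J(b₂+ε) - J(b₂))` for
`J(b) = ∫_0^∞ h'(y+b) e^{-φy} dy` with `h` convex. -/
theorem stmt15
    (φ : ℝ) (hφ : 0 < φ)
    (h : ℝ → ℝ) (hconv : ConvexOn ℝ Set.univ h) (hdiff : Differentiable ℝ h)
    (hint : ∀ b : ℝ,
      IntegrableOn (fun y => deriv h (y + b) * Real.exp (-φ * y)) (Set.Ioi 0))
    (J : ℝ → ℝ)
    (hJ : ∀ b : ℝ, J b = ∫ y in Set.Ioi (0 : ℝ), deriv h (y + b) * Real.exp (-φ * y)) :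
    ∀ b₁ b₂ : ℝ, b₁ ≤ b₂ → ∀ ε : ℝ, 0 < ε →
      Real.exp (-φ * (b₂ - b₁)) * (J (b₂ + ε) - J b₂) ≤ J (b₁ + ε) - J b₁ := by
  intro b₁ b₂ hb ε hε
  have hmono : ∀ x y : ℝ, x ≤ y → deriv h x ≤ deriv h y := fun x y hxy =>
    hconv.monotoneOn_deriv (fun x _ => hdiff x) (mem_univ x) (mem_univ y) hxy
  rw [hJ, hJ, hJ, hJ, ← integral_sub (hint _) (hint _), ← integral_sub (hint _) (hint _),
    ← integral_const_mul]
  set F : ℝ → ℝ := fun y => deriv h (y + (b₁ + ε)) * Real.exp (-φ * y)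
    - deriv h (y + b₁) * Real.exp (-φ * y) with hF
  have hFint : IntegrableOn F (Ioi 0) := (hint _).sub (hint _)
  have hF0 : ∀ y, 0 ≤ F y := fun y => by
    have := mul_le_mul_of_nonneg_right (hmono (y + b₁) (y + (b₁ + ε)) (by linarith))
      (Real.exp_pos (-φ * y)).le
    simp only [hF]; linarith
  have key := (measurePreserving_add_right volume (b₂ - b₁)).setIntegral_preimage_emb
    (measurableEmbedding_addRight (b₂ - b₁)) F (Ioi (b₂ - b₁))
  rw [Set.preimage_add_const_Ioi, sub_self] at key
  calc _ = ∫ y in Ioi (0:ℝ), F (y + (b₂ - b₁)) := by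
        congr 1; ext y
        have e1 : y + (b₂ - b₁) + (b₁ + ε) = y + (b₂ + ε) := by ring
        have e2 : y + (b₂ - b₁) + b₁ = y + b₂ := by ring
        have e3 : -φ * (y + (b₂ - b₁)) = -φ * (b₂ - b₁) + -φ * y := by ring
        simp only [hF, e1, e2, e3, Real.exp_add]; ring
    _ = ∫ y in Ioi (b₂ - b₁), F y := key
    _ ≤ ∫ y in Ioi (0:ℝ), F y :=
        setIntegral_mono_set hFint (Eventually.of_forall hF0)
          (Ioi_subset_Ioi (sub_nonneg.2 hb)).eventuallyLE
end

section
/- Let a, b ∈ ℝ, let (f_n) be a sequence of convex differentiable functions ℝ → ℝ, and let f : ℝ → ℝ be convex and differentiable. Suppose that f_n(x) ≥ f(x) for all x ∈ ℝ and all n, that f_n(a) → f(a), and that f_n′(z) → f′(z) for every z ≠ b. Then f_n(x) → f(x) for every x ≥ a. -/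
open Filter

/-- final step of Theorem 5.5: convergence of a sequence of convex
functions dominating a convex limit, given convergence at a point `a` and of the
derivatives away from `b`, extends to all `x ≥ a`. -/
theorem stmt16
    (a b : ℝ)
    (f : ℕ → ℝ → ℝ)
    (hfconv : ∀ n, ConvexOn ℝ Set.univ (f n))
    (hfdiff : ∀ n, Differentiable ℝ (f n))
    (g : ℝ → ℝ)
    (hgconv : ConvexOn ℝ Set.univ g)
    (hgdiff : Differentiable ℝ g)
    (hge : ∀ n : ℕ, ∀ x : ℝ, g x ≤ f n x)
    (ha : Tendsto (fun n => f n a) atTop (nhds (g a)))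
    (hderiv : ∀ z : ℝ, z ≠ b →
      Tendsto (fun n => deriv (f n) z) atTop (nhds (deriv g z))) :
    ∀ x : ℝ, a ≤ x → Tendsto (fun n => f n x) atTop (nhds (g x)) := by
  intro x hx
  have mono : ∀ h : ℝ → ℝ, ConvexOn ℝ Set.univ h → Differentiable ℝ h → Monotone (deriv h) := by
    intro h hc hd
    exact monotoneOn_univ.mp (hc.monotoneOn_deriv (fun y _ => hd y))
  have ftc : ∀ h : ℝ → ℝ, ConvexOn ℝ Set.univ h → Differentiable ℝ h →
      ∫ y in a..x, deriv h y = h x - h a := by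
    intro h hc hd
    exact intervalIntegral.integral_deriv_eq_sub (fun y _ => hd y)
      (mono h hc hd).intervalIntegrable
  obtain ⟨p, hp, hpb⟩ : ∃ p, p ≤ a ∧ p ≠ b :=
    ⟨min a b - 1, by linarith [min_le_left a b], by
      have := min_le_right a b
      intro h
      linarith⟩
  obtain ⟨q, hq, hqb⟩ : ∃ q, x ≤ q ∧ q ≠ b :=
    ⟨max x b + 1, by linarith [le_max_left x b], by
      have := le_max_right x b
      intro h
      linarith⟩
  have e1 : ∀ᶠ n in atTop, deriv g p - 1 < deriv (f n) p :=
    (hderiv p hpb).eventually (lt_mem_nhds (by linarith))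
  have e2 : ∀ᶠ n in atTop, deriv (f n) q < deriv g q + 1 :=
    (hderiv q hqb).eventually (gt_mem_nhds (by linarith))
  have key : Tendsto (fun n => ∫ y in a..x, deriv (f n) y) atTop
      (nhds (∫ y in a..x, deriv g y)) := by
    refine intervalIntegral.tendsto_integral_filter_of_dominated_convergence
      (fun _ => |deriv g p - 1| + |deriv g q + 1|) ?_ ?_ ?_ ?_
    · exact Eventually.of_forall fun n =>
        (mono _ (hfconv n) (hfdiff n)).measurable.aestronglyMeasurable
    · filter_upwards [e1, e2] with n h1 h2
      refine Eventually.of_forall fun y hy => ?_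
      rw [Set.uIoc_of_le hx] at hy
      have m := mono _ (hfconv n) (hfdiff n)
      have m1 := m (show p ≤ y by linarith [hy.1])
      have m2 := m (show y ≤ q by linarith [hy.2])
      rw [Real.norm_eq_abs, abs_le]
      constructor
      · linarith [neg_abs_le (deriv g p - 1), abs_nonneg (deriv g q + 1)]
      · linarith [le_abs_self (deriv g q + 1), abs_nonneg (deriv g p - 1)]
    · exact intervalIntegrable_const
    · have : ∀ᵐ y : ℝ, y ≠ b := by
        simp [MeasureTheory.ae_iff]
      filter_upwards [this] with y hy _
      exact hderiv y hy
  rw [ftc g hgconv hgdiff] at key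
  have := key.add ha
  simpa [ftc _ (hfconv _) (hfdiff _)] using this
end
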